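/- The matroid M*(K_5), the dual of the cycle matroid of the complete graph K_5, is an excluded minor of \overline{BL}; in particular, there is no graph G with L(G) isomorphic to M*(K_5). -/

import Mathlib

/-!
Represent `M(K₅)` over `ZMod 2` by the boundaries of the edges. A set is then dependent in the dual
matroid `N` exactly when it contains a nonempty cut of `K₅`. In particular the star of a vertex `x`
is dependent, and the set of the six edges avoiding `x` is independent.

Suppose that `N = L(H)`. Let `ab` be an edge of `K₅` and `x` a third vertex. The stars of `a` and
`b` each contain two cycles of `H`, hence still contain a cycle after the edges `xa` and `xb` are
removed. What remains of the two stars avoids `x`, so it is independent and contains only one cycle,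
which must lie in the intersection `{ab}` of the stars. Thus every edge is a loop of `H`, although
an independent set of `L(H)` contains at most one loop.

Suppose that `N = M(H)`. The star of a vertex of `H` is dependent in `M(K₅)` unless it consists of
loops, so it has at least three edges. Six independent edges span at least seven vertices of `H`,
hence `3 * 7 ≤ 2 * 10`, a contradiction.

A proper minor of `N` is a minor of the dual of the cycle matroid of `K₅ - e` or `K₅ / e`. Both
graphs are planar, and explicit planar duals show that these matroids are graphic.
-/

open Set Matroid

universe u

namespace BLFormal

/-! ### Matroid preliminaries -/

/-- A circuit of a matroid: a minimal dependent set. -/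
def Circuit {α : Type u} (M : Matroid α) (C : Set α) : Prop := Minimal M.Dep C

/-- Deletion of a set of elements from a matroid. -/
def del {α : Type u} (M : Matroid α) (D : Set α) : Matroid α := M ↾ (M.E \ D)

/-- Contraction of a set of elements of a matroid, defined by duality. -/
def con {α : Type u} (M : Matroid α) (C : Set α) : Matroid α := (del M✶ C)✶

/-- `N` is a minor of `M` if it is obtained by a contraction followed by a deletion. -/
def IsMinor {α : Type u} (N M : Matroid α) : Prop := ∃ C D : Set α, N = del (con M C) D

/-- `N` is a proper (strict) minor of `M`. -/
def IsStrictMinor {α : Type u} (N M : Matroid α) : Prop := IsMinor N M ∧ N ≠ M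

/-- The rank of a set `X` in the matroid `M`, as an extended natural number:
the supremum of the cardinalities of the independent subsets of `X`. -/
noncomputable def eRk {α : Type u} (M : Matroid α) (X : Set α) : ℕ∞ :=
  ⨆ I : {I : Set α // M.Indep I ∧ I ⊆ X}, (I : Set α).encard

/-- The rank `r(M)` of a matroid, as an extended natural number. -/
noncomputable def eRank {α : Type u} (M : Matroid α) : ℕ∞ := eRk M M.E

/-- A loop of a matroid. -/
def MLoop {α : Type u} (M : Matroid α) (e : α) : Prop := M.Dep {e}

/-- A coloop of a matroid: a loop of the dual. -/
def MColoop {α : Type u} (M : Matroid α) (e : α) : Prop := MLoop M✶ e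

/-- A `k`-separation of a matroid: a partition `(X, Y)` of the ground set with
`|X|, |Y| ≥ k` and `r(X) + r(Y) - r(M) ≤ k - 1`. -/
def IsKSep {α : Type u} (M : Matroid α) (k : ℕ) (X Y : Set α) : Prop :=
  X ∪ Y = M.E ∧ Disjoint X Y ∧ (k : ℕ∞) ≤ X.encard ∧ (k : ℕ∞) ≤ Y.encard ∧
    eRk M X + eRk M Y ≤ eRank M + ((k - 1 : ℕ) : ℕ∞)

/-- A matroid is connected if it has no 1-separation. -/
def MConnected {α : Type u} (M : Matroid α) : Prop := ¬ ∃ X Y, IsKSep M 1 X Y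

/-- A matroid is 3-connected if it is connected and has no 2-separation. -/
def ThreeConnected {α : Type u} (M : Matroid α) : Prop :=
  MConnected M ∧ ¬ ∃ X Y, IsKSep M 2 X Y

/-- Two elements of a matroid form a series pair if no circuit contains exactly one
of them, and some circuit contains both. -/
def SeriesPair {α : Type u} (M : Matroid α) (e f : α) : Prop :=
  (∀ C, Circuit M C → (e ∈ C ↔ f ∈ C)) ∧ ∃ C, Circuit M C ∧ e ∈ C ∧ f ∈ C

/-- A series class: a maximal set in which every two elements form a series pair. -/
def IsSeriesClass {α : Type u} (M : Matroid α) (S : Set α) : Prop :=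
  Maximal (fun T => T.Nonempty ∧ ∀ e ∈ T, ∀ f ∈ T, SeriesPair M e f) S

/-- `N` is a cosimplification `co(M)` of `M`: it is obtained from `M` by contracting
all coloops and, in each series class, all but one element. -/
def IsCosimplification {α : Type u} (M N : Matroid α) : Prop :=
  ∃ D ⊆ M.E, N = con M D ∧ (∀ e, MColoop M e → e ∈ D) ∧
    ∀ S, IsSeriesClass M S → ∃ x ∈ S, S \ D = {x}

/-- `M` is isomorphic to the uniform matroid `U_{k, n}`: the ground set has `n` elements
and the circuits are precisely the `(k+1)`-element subsets of the ground set. -/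
def IsUnif {α : Type u} (k n : ℕ) (M : Matroid α) : Prop :=
  M.E.encard = n ∧ ∀ C, Circuit M C ↔ C ⊆ M.E ∧ C.encard = k + 1

/-- `M` has a `U_{2,4}`-minor. -/
def HasU24Minor {α : Type u} (M : Matroid α) : Prop := ∃ N, IsMinor N M ∧ IsUnif 2 4 N

/-- `M` is isomorphic to the direct sum `U_{2,4} ⊕ U_{0,1}` of `U_{2,4}` and a loop:
its ground set consists of a 4-element set `X` together with one further element `l`,
and its circuits are `{l}` and the 3-element subsets of `X`. -/
def IsU24PlusLoop {α : Type u} (M : Matroid α) : Prop :=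
  ∃ (X : Set α) (l : α), l ∉ X ∧ M.E = insert l X ∧ X.encard = 4 ∧
    ∀ C, Circuit M C ↔ (C = {l} ∨ (C ⊆ X ∧ C.encard = 3))

/-- `M` is isomorphic to the Fano matroid `F₇`: the rank-3 matroid represented over
`GF(2)` by the seven nonzero vectors of `GF(2)³`. -/
def IsFano {α : Type u} (M : Matroid α) : Prop :=
  ∃ v : α → (Fin 3 → ZMod 2),
    Set.BijOn v M.E {w | w ≠ 0} ∧
    ∀ I ⊆ M.E, (M.Indep I ↔ LinearIndependent (ZMod 2) (fun x : I => v x))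

/-! ### Graphs (with loops and parallel edges allowed) -/

/-- A graph on vertex type `V`, with edge set `E` living in the ambient edge type `α`;
each edge is sent to the unordered pair of its end-vertices. -/
structure Graph (V : Type u) (α : Type u) where
  E : Set α
  inc : α → Sym2 V

namespace Graph

variable {V : Type u} {α : Type u}

/-- The vertices incident with an edge set `C`. -/
def vertsOf (G : Graph V α) (C : Set α) : Set V := {v | ∃ e ∈ C, v ∈ G.inc e}

/-- The vertex set of a graph (we consider graphs without isolated vertices). -/
def verts (G : Graph V α) : Set V := G.vertsOf G.E

/-- Deletion of a set of edges from a graph. -/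
def delete (G : Graph V α) (D : Set α) : Graph V α := ⟨G.E \ D, G.inc⟩

/-- The degree of a vertex `v` in the edge set `C`, with loops counting twice. -/
noncomputable def deg (G : Graph V α) (C : Set α) (v : V) : ℕ :=
  {e ∈ C | v ∈ G.inc e}.ncard + {e ∈ C | G.inc e = Sym2.diag v}.ncard

/-- Two vertices are adjacent via an edge of `C`. -/
def AdjOn (G : Graph V α) (C : Set α) (u v : V) : Prop := ∃ e ∈ C, G.inc e = s(u, v)

/-- The subgraph with edge set `C` is connected. -/
def ConnectedOn (G : Graph V α) (C : Set α) : Prop :=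
  ∀ u ∈ G.vertsOf C, ∀ v ∈ G.vertsOf C, Relation.ReflTransGen (G.AdjOn C) u v

/-- `C` is a cycle of `G` : the edge set of a connected 2-regular subgraph. -/
def IsCycle (G : Graph V α) (C : Set α) : Prop :=
  C ⊆ G.E ∧ C.Finite ∧ C.Nonempty ∧ (∀ v ∈ G.vertsOf C, G.deg C v = 2) ∧ G.ConnectedOn C

/-- A graph is 2-edge-connected if each of its edges lies in a cycle. -/
def TwoEdgeConnected (G : Graph V α) : Prop := ∀ e ∈ G.E, ∃ C, G.IsCycle C ∧ e ∈ C

/-- A graph is connected if it has at least one vertex and any two of its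
vertices are joined by a path. -/
def Connected (G : Graph V α) : Prop := G.verts.Nonempty ∧ G.ConnectedOn G.E

/-- Delete a vertex from a graph (removing all edges incident with it). -/
def delVert (G : Graph V α) (v : V) : Graph V α := ⟨{e ∈ G.E | v ∉ G.inc e}, G.inc⟩

/-- A graph is 2-connected if it is connected and stays connected after the
deletion of any vertex. -/
def TwoConnected (G : Graph V α) : Prop :=
  G.Connected ∧ ∀ v ∈ G.verts, (G.delVert v).Connected

/-- `X` contains at least two (distinct) cycles of `G`. -/
def HasTwoCycles (G : Graph V α) (X : Set α) : Prop :=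
  ∃ C₁ C₂, G.IsCycle C₁ ∧ G.IsCycle C₂ ∧ C₁ ≠ C₂ ∧ C₁ ⊆ X ∧ C₂ ⊆ X

/-- The circuits of the bicircular lift matroid of `G`: edge sets containing at
least two cycles and minimal with this property. -/
def LiftCircuit (G : Graph V α) (X : Set α) : Prop :=
  Minimal (fun Y => Y ⊆ G.E ∧ G.HasTwoCycles Y) X

/-- Two edges of a graph form a series pair if no cycle contains exactly one of
them, and some cycle contains both. -/
def SeriesPair (G : Graph V α) (e f : α) : Prop :=
  (∀ C, G.IsCycle C → (e ∈ C ↔ f ∈ C)) ∧ ∃ C, G.IsCycle C ∧ e ∈ C ∧ f ∈ C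

end Graph

/-- `N` is the bicircular lift matroid `L(G)` of `G` : its ground set is `E(G)`
and its circuits are the lift circuits of `G`. -/
def IsLiftRep {V α : Type u} (G : Graph V α) (N : Matroid α) : Prop :=
  N.E = G.E ∧ ∀ C, Circuit N C ↔ G.LiftCircuit C

/-- `N` is the cycle matroid `M(G)` of `G` : its ground set is `E(G)` and its
circuits are the cycles of `G`. -/
def IsGraphicRep {V α : Type u} (G : Graph V α) (N : Matroid α) : Prop :=
  N.E = G.E ∧ ∀ C, Circuit N C ↔ G.IsCycle C

/-- A matroid is bicircular lift if it is (isomorphic to) `L(G)` for some graph `G`. -/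
def IsBicircularLift {α : Type u} (N : Matroid α) : Prop :=
  ∃ (V : Type u) (G : Graph V α), IsLiftRep G N

/-- A matroid is graphic if it is (isomorphic to) the cycle matroid of some graph. -/
def IsGraphic {α : Type u} (N : Matroid α) : Prop :=
  ∃ (V : Type u) (G : Graph V α), IsGraphicRep G N

/-- The class `BL-bar` of matroids that are graphic or bicircular lift. -/
def InBL {α : Type u} (N : Matroid α) : Prop := IsGraphic N ∨ IsBicircularLift N

/-- `M` is an excluded minor for the class `BL-bar`. -/
def ExcludedMinorBL {α : Type u} (M : Matroid α) : Prop :=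
  ¬ InBL M ∧ ∀ N, IsStrictMinor N M → InBL N

/-! ### Special graphs and subdivisions -/

/-- `G` is (a copy of) the complete graph `K₄`. -/
def IsK4 {V α : Type u} (G : Graph V α) : Prop :=
  ∃ v : Fin 4 → V, Function.Injective v ∧
    ∃ ed : {p : Sym2 (Fin 4) // ¬ p.IsDiag} → α, Function.Injective ed ∧
      G.E = Set.range ed ∧ ∀ p, G.inc (ed p) = Sym2.map v p.1

/-- `G` is (a copy of) the complete graph `K₅`. -/
def IsK5 {V α : Type u} (G : Graph V α) : Prop :=
  ∃ v : Fin 5 → V, Function.Injective v ∧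
    ∃ ed : {p : Sym2 (Fin 5) // ¬ p.IsDiag} → α, Function.Injective ed ∧
      G.E = Set.range ed ∧ ∀ p, G.inc (ed p) = Sym2.map v p.1

/-- `G` is (a copy of) the complete bipartite graph `K₃,₃`. -/
def IsK33 {V α : Type u} (G : Graph V α) : Prop :=
  ∃ a b : Fin 3 → V, Function.Injective a ∧ Function.Injective b ∧
    Set.range a ∩ Set.range b = ∅ ∧
    ∃ ed : Fin 3 × Fin 3 → α, Function.Injective ed ∧
      G.E = Set.range ed ∧ ∀ p, G.inc (ed p) = s(a p.1, b p.2)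

/-- `G` is (a copy of) the graph `K₂ⁿ` with two vertices joined by `n` parallel edges. -/
def IsK2n {V α : Type u} (n : ℕ) (G : Graph V α) : Prop :=
  ∃ u v : V, u ≠ v ∧ ∃ ed : Fin n → α, Function.Injective ed ∧
    G.E = Set.range ed ∧ ∀ i, G.inc (ed i) = s(u, v)

/-- `H` is obtained from `G` by subdividing a single edge. -/
def ElemSub {V α : Type u} (G H : Graph V α) : Prop :=
  ∃ e ∈ G.E, ∃ (f g : α) (u v w : V),
    G.inc e = s(u, v) ∧ w ∉ G.verts ∧ f ≠ g ∧
    f ∉ G.E \ {e} ∧ g ∉ G.E \ {e} ∧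
    H.E = (G.E \ {e}) ∪ {f, g} ∧
    H.inc f = s(u, w) ∧ H.inc g = s(w, v) ∧
    ∀ x ∈ G.E \ {e}, H.inc x = G.inc x

/-- `H` is a subdivision of `G` : it is obtained from `G` by repeatedly
subdividing edges. -/
def IsSubdivision {V α : Type u} (G H : Graph V α) : Prop :=
  Relation.ReflTransGen ElemSub G H

/-! ### 2-sums and simplification -/

/-- `N` is the 2-sum `N₁ ⊕₂ᵉ N₂` of `N₁` and `N₂` along `e`. -/
def Is2Sum {α : Type u} (N N₁ N₂ : Matroid α) (e : α) : Prop :=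
  N₁.E ∩ N₂.E = {e} ∧
  ¬ MLoop N₁ e ∧ ¬ MColoop N₁ e ∧ ¬ MLoop N₂ e ∧ ¬ MColoop N₂ e ∧
  N.E = (N₁.E ∪ N₂.E) \ {e} ∧
  ∀ C, Circuit N C ↔
    ((Circuit N₁ C ∧ e ∉ C) ∨ (Circuit N₂ C ∧ e ∉ C) ∨
      ∃ C₁ C₂, Circuit N₁ C₁ ∧ Circuit N₂ C₂ ∧ e ∈ C₁ ∧ e ∈ C₂ ∧
        C = (C₁ \ {e}) ∪ (C₂ \ {e}))

/-- `H` is a simplification `si(G)` of `G` : it is obtained from `G` by deleting all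
loops and all but one edge of each parallel class. -/
def IsSimplification {V α : Type u} (G H : Graph V α) : Prop :=
  H.inc = G.inc ∧ H.E ⊆ G.E ∧ (∀ e ∈ H.E, ¬ (G.inc e).IsDiag) ∧
    ∀ e ∈ G.E, ¬ (G.inc e).IsDiag → ∃! f, f ∈ H.E ∧ G.inc f = G.inc e

/-- `H` is 2-connected, or is obtained from a 2-connected graph and a single edge `K₂`
by identifying one end-vertex of the edge with a vertex of the 2-connected graph. -/
def TwoConnOrPendant {V α : Type u} (H : Graph V α) : Prop :=
  H.TwoConnected ∨
    ∃ (e : α) (u w : V), e ∈ H.E ∧ H.inc e = s(u, w) ∧ u ≠ w ∧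
      (H.delete {e}).TwoConnected ∧ u ∈ (H.delete {e}).verts ∧ w ∉ (H.delete {e}).verts

/-! ### Linear representations -/

section Represents

variable {K W W' α : Type*} [DivisionRing K] [AddCommGroup W] [Module K W] [AddCommGroup W']
  [Module K W'] {v : α → W} {M : Matroid α} {X C : Set α} {e : α}

/-- The vectors `v e`, for `e` in the ground set, represent the matroid `M` over `K`. -/
def Represents (K : Type*) {W α : Type*} [DivisionRing K] [AddCommGroup W] [Module K W]
    (v : α → W) (M : Matroid α) : Prop :=
  ∀ I ⊆ M.E, M.Indep I ↔ LinearIndepOn K v I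

namespace Represents

lemma dep_iff (h : Represents K v M) (hX : X ⊆ M.E) : M.Dep X ↔ ¬ LinearIndepOn K v X := by
  rw [← h X hX, not_indep_iff]

lemma mem_closure_iff_of_indep (h : Represents K v M) (hX : M.Indep X) (he : e ∈ M.E) :
    e ∈ M.closure X ↔ v e ∈ Submodule.span K (v '' X) := by
  by_cases heX : e ∈ X
  · exact iff_of_true (M.mem_closure_of_mem heX) (Submodule.subset_span (mem_image_of_mem v heX))
  have hlin := (h X hX.subset_ground).1 hX
  rw [hX.mem_closure_iff_of_notMem heX, h.dep_iff (insert_subset he hX.subset_ground), not_iff_comm,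
    hlin.notMem_span_iff, and_iff_left heX]

lemma span_eq_of_isBasis {I : Set α} (h : Represents K v M) (hI : M.IsBasis I X) :
    Submodule.span K (v '' I) = Submodule.span K (v '' X) := by
  refine le_antisymm (Submodule.span_mono (image_mono hI.subset)) (Submodule.span_le.2 ?_)
  rintro _ ⟨x, hx, rfl⟩
  exact (h.mem_closure_iff_of_indep hI.indep (hI.subset_ground hx)).1 (hI.subset_closure hx)

lemma mem_closure_iff (h : Represents K v M) (hX : X ⊆ M.E) (he : e ∈ M.E) :
    e ∈ M.closure X ↔ v e ∈ Submodule.span K (v '' X) := by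
  obtain ⟨I, hI⟩ := M.exists_isBasis X
  rw [← hI.closure_eq_closure, h.mem_closure_iff_of_indep hI.indep he, h.span_eq_of_isBasis hI]

lemma dual_dep_iff (h : Represents K v M) :
    M✶.Dep X ↔ X ⊆ M.E ∧
      ∃ φ : W →ₗ[K] K, (∃ e ∈ M.E, φ (v e) ≠ 0) ∧ ∀ e ∈ M.E \ X, φ (v e) = 0 := by
  rw [Dep, and_comm, dual_ground]
  refine and_congr_right fun hX => ?_
  rw [← coindep_def, coindep_iff_compl_spanning, spanning_iff_ground_subset_closure, not_subset]
  constructor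
  · rintro ⟨e, he, hcl⟩
    rw [h.mem_closure_iff sdiff_subset he] at hcl
    obtain ⟨φ, hφe, hφ⟩ := Submodule.exists_le_ker_of_notMem hcl
    exact ⟨φ, ⟨e, he, hφe⟩, fun f hf => hφ (Submodule.subset_span (mem_image_of_mem v hf))⟩
  · rintro ⟨φ, ⟨e, he, hφe⟩, hφ⟩
    refine ⟨e, he, fun hcl => hφe ?_⟩
    have hle : Submodule.span K (v '' (M.E \ X)) ≤ φ.ker :=
      Submodule.span_le.2 (image_subset_iff.2 hφ)
    exact hle ((h.mem_closure_iff sdiff_subset he).1 hcl)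

lemma delete (h : Represents K v M) (D : Set α) : Represents K v (M ＼ D) := by
  intro I hI
  obtain ⟨hIE, hID⟩ := subset_sdiff.1 hI
  rw [delete_indep_iff, and_iff_left hID, h I hIE]

lemma contract (h : Represents K v M) (hC : C ⊆ M.E) {π : W →ₗ[K] W'}
    (hπ : π.ker = Submodule.span K (v '' C)) : Represents K (π ∘ v) (M ／ C) := by
  intro J hJ
  obtain ⟨hJE, hJC⟩ := subset_sdiff.1 hJ
  obtain ⟨I, hI⟩ := M.exists_isBasis C
  have hIind := (h I hI.indep.subset_ground).1 hI.indep
  rw [← h.span_eq_of_isBasis hI] at hπ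
  have hinj : Function.Injective ((Submodule.span K (v '' I)).liftQ π hπ.ge) :=
    LinearMap.ker_eq_bot.1 (Submodule.ker_liftQ_eq_bot _ _ _ hπ.le)
  rw [hI.contract_indep_iff, and_iff_left hJC.symm, union_comm,
    h _ (union_subset hI.indep.subset_ground hJE),
    linearIndepOn_union_iff_quotient (hJC.symm.mono_left hI.subset), and_iff_right hIind,
    ← LinearMap.linearIndepOn_iff_of_injOn _ hinj.injOn]
  rfl

end Represents

end Represents

/-! ### Boundaries and even sets of edges -/

section endSum

variable {U V A B : Type*} [AddCommMonoid A] [AddCommMonoid B]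

/-- The sum of `f` over the two ends of an edge; the end of a loop is counted twice. -/
def endSum (f : V → A) : Sym2 V → A :=
  Sym2.lift ⟨fun a b => f a + f b, fun _ _ => add_comm _ _⟩

@[simp]
lemma endSum_mk (f : V → A) (a b : V) : endSum f s(a, b) = f a + f b := rfl

@[simp]
lemma endSum_map (f : V → A) (k : U → V) (p : Sym2 U) : endSum f (p.map k) = endSum (f ∘ k) p := by
  cases p
  rfl

lemma map_endSum {F : Type*} [FunLike F A B] [AddMonoidHomClass F A B] (g : F) (f : V → A)
    (p : Sym2 V) : g (endSum f p) = endSum (g ∘ f) p := by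
  cases p
  simp

lemma endSum_one (p : Sym2 V) : endSum (1 : V → ZMod 2) p = 0 := by
  induction p
  exact CharTwo.add_self_eq_zero 1

lemma endSum_single_pos_iff {v : V} {p : Sym2 V} :
    0 < endSum (Finsupp.single v 1 : V → ℕ) p ↔ v ∈ p := by
  classical
  induction p with | h a b => ?_
  simp only [endSum_mk, Finsupp.single_apply, Sym2.mem_iff]
  split_ifs <;> simp_all

end endSum

namespace Graph

variable {V α : Type u} {G : Graph V α} {C D : Finset α} {X : Set α} {e : α} {v : V}

lemma deg_eq_sum (G : Graph V α) (C : Finset α) (v : V) :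
    G.deg C v = ∑ e ∈ C, endSum (Finsupp.single v 1) (G.inc e) := by
  classical
  have hcard (P : α → Prop) : {e ∈ (C : Set α) | P e}.ncard = ∑ e ∈ C, if P e then 1 else 0 := by
    rw [← Finset.card_filter, ← ncard_coe_finset, Finset.coe_filter]
    rfl
  rw [deg, hcard, hcard, ← Finset.sum_add_distrib]
  refine Finset.sum_congr rfl fun e _ => ?_
  induction G.inc e with | h a b => ?_
  have hdiag : s(a, b) = Sym2.diag v ↔ v = a ∧ v = b := by simp [Sym2.diag, eq_comm (a := v)]
  simp only [endSum_mk, Finsupp.single_apply, Sym2.mem_iff, hdiag]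
  split_ifs <;> simp_all

lemma deg_pos_iff : 0 < G.deg C v ↔ v ∈ G.vertsOf C := by
  simp [deg_eq_sum, Finset.sum_pos_iff, endSum_single_pos_iff, vertsOf]

lemma deg_mono (h : D ⊆ C) (v : V) : G.deg D v ≤ G.deg C v := by
  rw [deg_eq_sum, deg_eq_sum]
  exact Finset.sum_le_sum_of_subset h

lemma deg_lt_deg (h : D ⊆ C) (heC : e ∈ C) (heD : e ∉ D) (hv : v ∈ G.inc e) :
    G.deg D v < G.deg C v := by
  rw [deg_eq_sum, deg_eq_sum]
  exact Finset.sum_lt_sum_of_subset h heC heD (endSum_single_pos_iff.2 hv)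
    fun _ _ _ => Nat.zero_le _

lemma sum_deg_eq_two_mul_card {S : Finset V} (hS : G.vertsOf C ⊆ S) :
    ∑ v ∈ S, G.deg C v = 2 * C.card := by
  simp_rw [deg_eq_sum]
  rw [Finset.sum_comm, Finset.sum_const_nat (m := 2), mul_comm]
  intro e he
  have hends : ∀ v ∈ G.inc e, v ∈ S := fun v hv => hS ⟨e, he, hv⟩
  generalize G.inc e = p at hends ⊢
  induction p with | h a b => ?_
  have ha : a ∈ S := hends a (Sym2.mem_mk_left a b)
  have hb : b ∈ S := hends b (Sym2.mem_mk_right a b)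
  classical
  simp [Finset.sum_add_distrib, Finsupp.single_apply, ha, hb]

/-- The boundary of an edge over `ZMod 2`: the column of the edge in the incidence matrix. The
boundary of a loop is zero. -/
noncomputable def boundary (G : Graph V α) (e : α) : V →₀ ZMod 2 :=
  endSum (fun v => Finsupp.single v 1) (G.inc e)

/-- A finite set of edges is even if it meets every vertex in an even number of edges, where loops
count twice; over `ZMod 2`, these are the elements of the cycle space. -/
def IsEven (G : Graph V α) (C : Finset α) : Prop := ∀ v, Even (G.deg C v)

lemma sum_boundary_apply (G : Graph V α) (C : Finset α) (v : V) :
    (∑ e ∈ C, G.boundary e) v = G.deg C v := by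
  classical
  rw [deg_eq_sum, Nat.cast_sum, Finsupp.finsetSum_apply]
  refine Finset.sum_congr rfl fun e _ => ?_
  unfold boundary
  induction G.inc e with | h a b => ?_
  simp [Finsupp.single_apply, eq_comm]

lemma isEven_iff_sum_boundary_eq_zero : G.IsEven C ↔ ∑ e ∈ C, G.boundary e = 0 := by
  simp [IsEven, Finsupp.ext_iff, sum_boundary_apply, ZMod.natCast_eq_zero_iff_even]

lemma sum_symmDiff {A : Type*} [AddCommGroup A] [Module (ZMod 2) A] [DecidableEq α]
    (C D : Finset α) (f : α → A) : ∑ e ∈ symmDiff C D, f e = ∑ e ∈ C, f e + ∑ e ∈ D, f e := by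
  rw [← Finset.sum_inter_add_sum_sdiff C D, ← Finset.sum_inter_add_sum_sdiff D C,
    Finset.inter_comm D, add_add_add_comm, ZModModule.add_self, zero_add, symmDiff_def,
    Finset.sup_eq_union, Finset.sum_union disjoint_sdiff_sdiff]

lemma IsEven.symmDiff [DecidableEq α] (hC : G.IsEven C) (hD : G.IsEven D) :
    G.IsEven (symmDiff C D) := by
  rw [isEven_iff_sum_boundary_eq_zero] at *
  rw [sum_symmDiff, hC, hD, add_zero]

lemma not_linearIndepOn_boundary_iff : ¬ LinearIndepOn (ZMod 2) G.boundary X ↔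
    ∃ C : Finset α, C.Nonempty ∧ ↑C ⊆ X ∧ G.IsEven C := by
  constructor
  · intro h
    obtain ⟨f, hfX, hf, hf0⟩ := linearDepOn_iff.1 h
    refine ⟨f.support, Finsupp.support_nonempty_iff.2 hf0, hfX, ?_⟩
    rw [isEven_iff_sum_boundary_eq_zero, ← hf]
    refine Finset.sum_congr rfl fun e he => ?_
    have hfe : f e = 1 := Fin.eq_one_of_ne_zero (f e) (Finsupp.mem_support_iff.1 he)
    rw [hfe, one_smul]
  · rintro ⟨C, ⟨e, he⟩, hCX, hC⟩ h
    rw [isEven_iff_sum_boundary_eq_zero] at hC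
    exact one_ne_zero (linearIndepOn_iff'.1 h C 1 hCX (by simpa using hC) e he)

end Graph

/-! ### Cycles and the graphic matroid -/

namespace Graph

variable {V α : Type u} {G : Graph V α} {C D : Finset α} {X : Set α} {e : α} {u v : V}

lemma linearCombination_boundary (c : V → ZMod 2) (e : α) :
    Finsupp.linearCombination (ZMod 2) c (G.boundary e) = endSum c (G.inc e) := by
  rw [boundary, map_endSum]
  congr 1
  ext v
  simp

lemma boundary_mem_span {S : Set V} (hS : ∀ v ∈ G.inc e, v ∈ S) :
    G.boundary e ∈ Submodule.span (ZMod 2) ((fun v => Finsupp.single v 1) '' S) := by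
  unfold boundary
  generalize G.inc e = p at hS ⊢
  induction p with | h a b => ?_
  exact add_mem (Submodule.subset_span (mem_image_of_mem _ (hS a (Sym2.mem_mk_left a b))))
    (Submodule.subset_span (mem_image_of_mem _ (hS b (Sym2.mem_mk_right a b))))

/- The boundaries lie in the hyperplane of vectors with coordinate sum zero. -/
lemma card_lt_card_of_linearIndepOn_boundary {S : Finset V} (hS : S.Nonempty)
    (hCS : G.vertsOf C ⊆ S) (hC : LinearIndepOn (ZMod 2) G.boundary (C : Set α)) :
    C.card < S.card := by
  classical
  set single : V → V →₀ ZMod 2 := fun v => Finsupp.single v 1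
  have hker : Submodule.span (ZMod 2) (G.boundary '' C) ≤
      (Finsupp.linearCombination (ZMod 2) (1 : V → ZMod 2)).ker := by
    rw [Submodule.span_le, image_subset_iff]
    exact fun e _ => (linearCombination_boundary 1 e).trans (endSum_one _)
  have hlt : Submodule.span (ZMod 2) (G.boundary '' C) <
      Submodule.span (ZMod 2) (S.image single : Set (V →₀ ZMod 2)) := by
    rw [Finset.coe_image]
    refine lt_of_le_not_ge ?_ fun hle => ?_
    · rw [Submodule.span_le, image_subset_iff]
      exact fun e he => boundary_mem_span fun v hv => hCS ⟨e, he, hv⟩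
    · obtain ⟨s, hs⟩ := hS
      have := hker (hle (Submodule.subset_span (mem_image_of_mem single hs)))
      simp [single] at this
  calc C.card = Module.finrank (ZMod 2) (Submodule.span (ZMod 2) (G.boundary '' C)) := by
        rw [image_eq_range, finrank_span_eq_card hC]
        exact (Fintype.card_coe C).symm
    _ < Module.finrank (ZMod 2) (Submodule.span (ZMod 2) (S.image single : Set (V →₀ ZMod 2))) :=
        Submodule.finrank_lt_finrank_of_lt hlt
    _ ≤ (S.image single).card := finrank_span_finset_le_card _
    _ ≤ S.card := Finset.card_image_le

lemma IsCycle.isEven (hC : G.IsCycle C) : G.IsEven C := by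
  intro v
  by_cases hv : v ∈ G.vertsOf C
  · rw [hC.2.2.2.1 v hv]
    exact even_two
  · rw [Nat.eq_zero_of_not_pos (deg_pos_iff.not.2 hv)]
    exact Even.zero

lemma IsEven.eq_of_subset_isCycle (hD : G.IsEven D) (hne : D.Nonempty) (hDC : D ⊆ C)
    (hC : G.IsCycle C) : D = C := by
  obtain ⟨-, -, -, hdeg, hconn⟩ := hC
  have hmono : G.vertsOf D ⊆ G.vertsOf C := fun v ⟨e, he, hv⟩ => ⟨e, hDC he, hv⟩
  have hedge : ∀ v ∈ G.vertsOf D, ∀ e ∈ C, v ∈ G.inc e → e ∈ D := by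
    intro v hv e he hve
    by_contra heD
    have hlt := deg_lt_deg hDC he heD hve
    have hpos := deg_pos_iff.2 hv
    obtain ⟨k, hk⟩ := hD v
    have := hdeg v (hmono hv)
    omega
  obtain ⟨f, hf⟩ := hne
  obtain ⟨w, hw⟩ : ∃ w, w ∈ G.inc f := ⟨_, Sym2.out_fst_mem _⟩
  have hw : w ∈ G.vertsOf D := ⟨f, hf, hw⟩
  have hreach : ∀ v, Relation.ReflTransGen (G.AdjOn C) w v → v ∈ G.vertsOf D := by
    intro v hv
    induction hv with
    | refl => exact hw
    | tail _ hadj ih =>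
      obtain ⟨e, he, hinc⟩ := hadj
      exact ⟨e, hedge _ ih e he (by simp [hinc]), by simp [hinc]⟩
  refine hDC.antisymm fun e he => ?_
  obtain ⟨v, hv⟩ : ∃ v, v ∈ G.inc e := ⟨_, Sym2.out_fst_mem _⟩
  exact hedge v (hreach v (hconn w (hmono hw) v ⟨e, he, hv⟩)) e he hv

lemma IsCycle.eq_of_subset {C D : Set α} (hD : G.IsCycle D) (hC : G.IsCycle C) (h : D ⊆ C) :
    D = C := by
  lift C to Finset α using hC.2.1
  lift D to Finset α using hD.2.1
  rw [hD.isEven.eq_of_subset_isCycle (by simpa using hD.2.2.1) (by simpa using h) hC]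

lemma reflTransGen_adjOn_of_mem {X : Set α} (he : e ∈ X) (hu : u ∈ G.inc e) (hv : v ∈ G.inc e) :
    Relation.ReflTransGen (G.AdjOn X) u v := by
  by_cases huv : u = v
  · rw [huv]
  · exact .single ⟨e, he, (Sym2.mem_and_mem_iff huv).1 ⟨hu, hv⟩⟩

/- Otherwise the edges of one component would form a smaller even set. -/
lemma connectedOn_of_minimal_isEven
    (hC : Minimal (fun D : Finset α => D.Nonempty ∧ G.IsEven D) C) : G.ConnectedOn C := by
  classical
  rintro u ⟨f, hf, hu⟩ v ⟨g, hg, hv⟩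
  let D := {e ∈ C | ∃ w ∈ G.inc e, Relation.ReflTransGen (G.AdjOn C) u w}
  have hreach : ∀ e ∈ D, ∀ x ∈ G.inc e, Relation.ReflTransGen (G.AdjOn C) u x := by
    intro e he x hx
    obtain ⟨heC, w, hw, huw⟩ := Finset.mem_filter.1 he
    exact huw.trans (reflTransGen_adjOn_of_mem heC hw hx)
  have hD : G.IsEven D := by
    intro w
    by_cases hw : Relation.ReflTransGen (G.AdjOn C) u w
    · have hle : G.deg C w ≤ G.deg D w := by
        rw [deg_eq_sum, deg_eq_sum]
        refine (Finset.sum_filter_of_ne fun e _ hne => ?_).ge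
        exact ⟨w, endSum_single_pos_iff.1 (Nat.pos_of_ne_zero hne), hw⟩
      rw [(deg_mono (Finset.filter_subset _ C) w).antisymm hle]
      exact hC.prop.2 w
    · have hzero : ¬ 0 < G.deg D w := fun hpos => by
        obtain ⟨e, he, hwe⟩ := deg_pos_iff.1 hpos
        exact hw (hreach e he w hwe)
      rw [Nat.eq_zero_of_not_pos hzero]
      exact Even.zero
  have hfD : f ∈ D := Finset.mem_filter.2 ⟨hf, u, hu, .refl⟩
  have hCD : C ⊆ D := hC.le_of_le ⟨⟨f, hfD⟩, hD⟩ (Finset.filter_subset _ C)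
  exact hreach g (hCD hg) v hv

lemma card_le_card_of_minimal_isEven {S : Finset V} (hCS : G.vertsOf C ⊆ S)
    (hC : Minimal (fun D : Finset α => D.Nonempty ∧ G.IsEven D) C) : C.card ≤ S.card := by
  classical
  obtain ⟨e, he⟩ := hC.prop.1
  have hindep : LinearIndepOn (ZMod 2) G.boundary (C.erase e : Set α) := by
    by_contra hdep
    obtain ⟨D, hne, hDC, hD⟩ := not_linearIndepOn_boundary_iff.1 hdep
    have hDC : D ⊆ C.erase e := Finset.coe_subset.1 hDC
    have hCD : C ⊆ D := hC.le_of_le ⟨hne, hD⟩ (hDC.trans (Finset.erase_subset e C))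
    exact Finset.notMem_erase e C (hDC (hCD he))
  have hlt := card_lt_card_of_linearIndepOn_boundary (S := S)
    ⟨_, hCS ⟨e, he, Sym2.out_fst_mem _⟩⟩
    (fun v ⟨f, hf, hv⟩ => hCS ⟨f, Finset.mem_of_mem_erase hf, hv⟩) hindep
  rw [Finset.card_erase_of_mem he] at hlt
  omega

lemma finite_vertsOf (G : Graph V α) (C : Finset α) : (G.vertsOf C).Finite := by
  classical
  refine (C.biUnion fun e => (G.inc e).toFinset).finite_toSet.subset fun v ⟨e, he, hv⟩ => ?_
  simpa using ⟨e, he, hv⟩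

/- All degrees are at least two, and their sum is at most twice the number of vertices. -/
lemma deg_eq_two_of_minimal_isEven
    (hC : Minimal (fun D : Finset α => D.Nonempty ∧ G.IsEven D) C) (hv : v ∈ G.vertsOf C) :
    G.deg C v = 2 := by
  obtain ⟨S, hS⟩ := (G.finite_vertsOf C).exists_finset_coe
  have htwo : ∀ w ∈ S, 2 ≤ G.deg C w := by
    intro w hw
    obtain ⟨k, hk⟩ := hC.prop.2 w
    have hpos := deg_pos_iff.2 (hS ▸ hw : w ∈ G.vertsOf C)
    omega
  have hle := card_le_card_of_minimal_isEven hS.ge hC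
  have hsum : ∑ _w ∈ S, 2 = ∑ w ∈ S, G.deg C w := by
    refine (Finset.sum_le_sum htwo).antisymm ?_
    rw [sum_deg_eq_two_mul_card hS.ge, Finset.sum_const, smul_eq_mul]
    omega
  exact ((Finset.sum_eq_sum_iff_of_le htwo).1 hsum v (hS.ge hv)).symm

lemma IsEven.exists_isCycle_subset (hC : G.IsEven C) (hne : C.Nonempty) (hCE : ↑C ⊆ G.E) :
    ∃ D : Set α, G.IsCycle D ∧ D ⊆ C := by
  obtain ⟨D, hDC, hD⟩ := exists_minimal_le_of_wellFoundedLT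
    (fun D : Finset α => D.Nonempty ∧ G.IsEven D) C ⟨hne, hC⟩
  have hDC : (D : Set α) ⊆ C := Finset.coe_subset.2 hDC
  exact ⟨D, ⟨hDC.trans hCE, D.finite_toSet, hD.prop.1,
    fun v hv => deg_eq_two_of_minimal_isEven hD hv, connectedOn_of_minimal_isEven hD⟩, hDC⟩

lemma not_linearIndepOn_boundary_iff_exists_isCycle (hX : X ⊆ G.E) :
    ¬ LinearIndepOn (ZMod 2) G.boundary X ↔ ∃ C, G.IsCycle C ∧ C ⊆ X := by
  rw [not_linearIndepOn_boundary_iff]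
  constructor
  · rintro ⟨C, hne, hCX, hC⟩
    obtain ⟨D, hD, hDC⟩ := hC.exists_isCycle_subset hne (hCX.trans hX)
    exact ⟨D, hD, hDC.trans hCX⟩
  · rintro ⟨C, hC, hCX⟩
    lift C to Finset α using hC.2.1
    exact ⟨C, by simpa using hC.2.2.1, hCX, hC.isEven⟩

end Graph

section IsGraphicRep

variable {V α : Type u} {G : Graph V α} {M : Matroid α}

lemma isGraphicRep_iff_dep :
    IsGraphicRep G M ↔ M.E = G.E ∧ ∀ X ⊆ M.E, M.Dep X ↔ ∃ C, G.IsCycle C ∧ C ⊆ X := by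
  refine and_congr_right fun hE => ⟨fun h X hX => ?_, fun h C => ⟨fun hC => ?_, fun hC => ?_⟩⟩
  · rw [dep_iff_superset_isCircuit]
    exact exists_congr fun C => (and_comm.trans (and_congr_left fun _ => h C))
  · obtain ⟨D, hD, hDC⟩ := (h C hC.prop.subset_ground).1 hC.prop
    have hDdep : M.Dep D := (h D (hDC.trans hC.prop.subset_ground)).2 ⟨D, hD, subset_rfl⟩
    rwa [hDC.antisymm (hC.le_of_le hDdep hDC)] at hD
  · have hCE : C ⊆ M.E := hE ▸ hC.1
    refine ⟨(h C hCE).2 ⟨C, hC, subset_rfl⟩, fun X hX hXC => ?_⟩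
    obtain ⟨D, hD, hDX⟩ := (h X (hXC.trans hCE)).1 hX
    rwa [← hD.eq_of_subset hC (hDX.trans hXC)]

lemma isGraphicRep_iff_represents :
    IsGraphicRep G M ↔ M.E = G.E ∧ Represents (ZMod 2) G.boundary M := by
  rw [isGraphicRep_iff_dep]
  refine and_congr_right fun hE => forall₂_congr fun X hX => ?_
  rw [← Graph.not_linearIndepOn_boundary_iff_exists_isCycle (hE ▸ hX), ← not_indep_iff,
    not_iff_not]

end IsGraphicRep

/-! ### Minors of graphic matroids -/

lemma ker_lmapDomain_quotMk {R V : Type*} [Ring R] (r : V → V → Prop) :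
    (Finsupp.lmapDomain R R (Quot.mk r)).ker =
      Submodule.span R {x | ∃ a b, r a b ∧ Finsupp.single a 1 - Finsupp.single b 1 = x} := by
  set S : Submodule R (V →₀ R) :=
    Submodule.span R {x | ∃ a b, r a b ∧ Finsupp.single a 1 - Finsupp.single b 1 = x}
  have hgen {a b : V} (hab : Relation.EqvGen r a b) :
      Finsupp.single a (1 : R) - Finsupp.single b 1 ∈ S := by
    induction hab with
    | rel a b hab => exact Submodule.subset_span ⟨a, b, hab, rfl⟩
    | refl a => simp
    | symm a b _ ih => simpa using S.neg_mem ih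
    | trans a b c _ _ ihab ihbc => simpa using S.add_mem ihab ihbc
  have hsection (x : V →₀ R) : x - (x.mapDomain (Quot.mk r)).mapDomain Quot.out ∈ S := by
    induction x using Finsupp.induction_linear with
    | zero => simp
    | add x y hx hy =>
      rw [Finsupp.mapDomain_add, Finsupp.mapDomain_add, add_sub_add_comm]
      exact S.add_mem hx hy
    | single a c =>
      have hout := Quot.eqvGen_exact (Quot.out_eq (Quot.mk r a)).symm
      simpa [smul_sub] using S.smul_mem c (hgen hout)
  apply le_antisymm
  · intro x hx
    rw [LinearMap.mem_ker, Finsupp.lmapDomain_apply] at hx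
    simpa [hx] using hsection x
  · rw [Submodule.span_le]
    rintro _ ⟨a, b, hab, rfl⟩
    simp [Finsupp.mapDomain_sub, Quot.sound hab]

namespace Graph

variable {V α : Type u} {G : Graph V α} {C : Set α}

/-- The graph `G / C`: the vertices of every component of the subgraph `C` are identified. -/
def contract (G : Graph V α) (C : Set α) : Graph (Quot (G.AdjOn C)) α :=
  ⟨G.E \ C, fun e => (G.inc e).map (Quot.mk _)⟩

lemma boundary_contract : (G.contract C).boundary =
    Finsupp.lmapDomain (ZMod 2) (ZMod 2) (Quot.mk (G.AdjOn C)) ∘ G.boundary := by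
  ext1 e
  rw [Function.comp_apply, boundary, boundary, map_endSum, contract, endSum_map]
  congr 1
  ext1 v
  simp

lemma ker_lmapDomain_eq_span_boundary :
    (Finsupp.lmapDomain (ZMod 2) (ZMod 2) (Quot.mk (G.AdjOn C))).ker =
      Submodule.span (ZMod 2) (G.boundary '' C) := by
  rw [ker_lmapDomain_quotMk]
  congr 1
  ext x
  constructor
  · rintro ⟨a, b, ⟨e, he, hinc⟩, rfl⟩
    exact ⟨e, he, by rw [boundary, hinc, endSum_mk, ZModModule.sub_eq_add]⟩
  · rintro ⟨e, he, rfl⟩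
    unfold boundary
    induction hinc : G.inc e with | h a b => ?_
    exact ⟨a, b, ⟨e, he, hinc⟩, by rw [endSum_mk, ZModModule.sub_eq_add]⟩

end Graph

section IsGraphicRep

variable {V α : Type u} {G : Graph V α} {M : Matroid α}

lemma IsGraphicRep.delete (h : IsGraphicRep G M) (D : Set α) :
    IsGraphicRep (G.delete D) (M ＼ D) := by
  rw [isGraphicRep_iff_represents] at h ⊢
  exact ⟨by rw [delete_ground, h.1, Graph.delete], h.2.delete D⟩

lemma IsGraphicRep.contract {C : Set α} (h : IsGraphicRep G M) (hC : C ⊆ M.E) :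
    IsGraphicRep (G.contract C) (M ／ C) := by
  rw [isGraphicRep_iff_represents] at h ⊢
  refine ⟨by rw [contract_ground, h.1, Graph.contract], ?_⟩
  rw [Graph.boundary_contract]
  exact h.2.contract hC Graph.ker_lmapDomain_eq_span_boundary

lemma IsGraphic.delete (h : IsGraphic M) (D : Set α) : IsGraphic (M ＼ D) := by
  obtain ⟨V, G, hG⟩ := h
  exact ⟨V, _, hG.delete D⟩

lemma IsGraphic.contract (h : IsGraphic M) (C : Set α) : IsGraphic (M ／ C) := by
  obtain ⟨V, G, hG⟩ := h
  rw [← contract_inter_ground_eq]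
  exact ⟨_, _, hG.contract inter_subset_right⟩

end IsGraphicRep

/-! ### Cuts and duality -/

/-- The cut of a 2-colouring `c` of the vertices: the edges with ends of different colours. -/
def Graph.cut {V α : Type u} (G : Graph V α) (c : V → ZMod 2) : Set α :=
  {e ∈ G.E | endSum c (G.inc e) ≠ 0}

section Cut

variable {V α : Type u} {G : Graph V α} {M : Matroid α} {X : Set α}

lemma IsGraphicRep.dual_dep_iff (h : IsGraphicRep G M) :
    M✶.Dep X ↔ X ⊆ G.E ∧ ∃ c, (G.cut c).Nonempty ∧ G.cut c ⊆ X := by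
  obtain ⟨hE, hM⟩ := isGraphicRep_iff_represents.1 h
  rw [hM.dual_dep_iff, hE]
  refine and_congr_right fun _ => ⟨?_, ?_⟩
  · rintro ⟨φ, hne, hX⟩
    have hφ (e : α) : φ (G.boundary e) = endSum (fun v => φ (Finsupp.single v 1)) (G.inc e) :=
      map_endSum φ _ _
    simp only [hφ] at hne hX
    exact ⟨_, hne, fun e he => by_contra fun heX => he.2 (hX e ⟨he.1, heX⟩)⟩
  · rintro ⟨c, hne, hX⟩
    refine ⟨Finsupp.linearCombination (ZMod 2) c, ?_⟩
    simp only [Graph.linearCombination_boundary]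
    exact ⟨hne, fun e he => by_contra fun hce => he.2 (hX ⟨he.1, hce⟩)⟩

end Cut

/-- Graphs with edges indexed by the same set `ι`, with ends `p i` and `q i`, are Whitney duals if
the cuts of the first are the even sets of the second. -/
def IsWhitneyDual {ι V W : Type*} [Fintype ι] (p : ι → Sym2 V) (q : ι → Sym2 W) : Prop :=
  ∀ z : ι → ZMod 2, (∃ c : V → ZMod 2, ∀ i, z i = endSum c (p i)) ↔
    ∀ w, ∑ i, z i * endSum (Finsupp.single w 1) (q i) = 0

lemma IsWhitneyDual.map_left {ι U V W : Type*} [Fintype ι] {p : ι → Sym2 U} {q : ι → Sym2 W}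
    (h : IsWhitneyDual p q) {k : U → V} (hk : Function.Injective k) :
    IsWhitneyDual (fun i => (p i).map k) q := by
  intro z
  simp only [← h z, endSum_map]
  exact (hk.surjective_comp_right.exists (p := fun c => ∀ i, z i = endSum c (p i))).symm

section WhitneyDual

variable {ι : Type*} [Fintype ι] {W : Type} {V α : Type u} {G : Graph V α} {M : Matroid α}
  {g : ι ↪ α} {q : ι → Sym2 W}

lemma IsWhitneyDual.isEven_iff {H : Graph (ULift.{u} W) α} {C : Finset α} (hE : G.E = range g)
    (h : IsWhitneyDual (fun i => G.inc (g i)) q) (hH : ∀ i, H.inc (g i) = (q i).map ULift.up)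
    (hC : ↑C ⊆ G.E) : H.IsEven C ↔ ∃ c, (C : Set α) = G.cut c := by
  classical
  have hCg : C ⊆ Finset.univ.map g := by simpa [← Finset.coe_subset, ← hE] using hC
  obtain ⟨I, -, rfl⟩ := Finset.subset_map_iff.1 hCg
  let z (i : ι) : ZMod 2 := if i ∈ I then 1 else 0
  have hdeg (w : W) :
      (H.deg ↑(I.map g) ⟨w⟩ : ZMod 2) = ∑ i, z i * endSum (Finsupp.single w 1) (q i) := by
    simp only [Graph.deg_eq_sum, Finset.sum_map, Nat.cast_sum, z, ite_mul, one_mul, zero_mul,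
      Finset.sum_ite_mem, Finset.univ_inter]
    refine Finset.sum_congr rfl fun i _ => ?_
    rw [hH]
    cases q i
    simp [Finsupp.single_apply]
  have hcut (c : V → ZMod 2) :
      ((I.map g : Finset α) : Set α) = G.cut c ↔ ∀ i, z i = endSum c (G.inc (g i)) := by
    have hz (i : ι) : z i = endSum c (G.inc (g i)) ↔ (i ∈ I ↔ endSum c (G.inc (g i)) ≠ 0) := by
      generalize endSum c (G.inc (g i)) = a
      by_cases hi : i ∈ I <;> simp only [z, hi, if_true, if_false] <;> revert a <;> decide
    have hsub : ((I.map g : Finset α) : Set α) = g '' {i | i ∈ I} := by simp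
    have hcg : G.cut c = g '' {i | endSum c (G.inc (g i)) ≠ 0} := by
      rw [Graph.cut, hE]
      exact (image_preimage_eq_range_inter (t := {e | endSum c (G.inc e) ≠ 0})).symm
    simp only [hsub, hcg, hz, g.injective.image_injective.eq_iff, Set.ext_iff, mem_ofPred_eq]
  rw [exists_congr hcut, h z, ← forall_congr fun w => congrArg (· = 0) (hdeg w)]
  simp only [Graph.IsEven, ZMod.natCast_eq_zero_iff_even, ULift.forall]

theorem IsGraphicRep.isGraphic_dual [Nonempty W] (h : IsGraphicRep G M) (hE : G.E = range g)
    (hq : IsWhitneyDual (fun i => G.inc (g i)) q) : IsGraphic M✶ := by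
  let H : Graph (ULift.{u} W) α :=
    ⟨G.E, Function.extend g (fun i => (q i).map ULift.up) fun _ => .diag (Classical.arbitrary _)⟩
  have hH (i : ι) : H.inc (g i) = (q i).map ULift.up := by
    simp only [H, g.injective.extend_apply]
  have hM : M✶.E = H.E := by rw [dual_ground, h.1]
  refine ⟨_, H, isGraphicRep_iff_represents.2 ⟨hM, fun X hX => ?_⟩⟩
  rw [hM] at hX
  rw [← not_iff_not, not_indep_iff, h.dual_dep_iff, Graph.not_linearIndepOn_boundary_iff,
    and_iff_right (show X ⊆ G.E from hX)]
  constructor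
  · rintro ⟨c, hne, hcX⟩
    have hfin : (G.cut c).Finite := (hE ▸ finite_range g).subset (sep_subset _ _)
    obtain ⟨C, hC⟩ := hfin.exists_finset_coe
    rw [← hC] at hne hcX
    exact ⟨C, Finset.coe_nonempty.1 hne, hcX, (hq.isEven_iff hE hH (hcX.trans hX)).2 ⟨c, hC⟩⟩
  · rintro ⟨C, hne, hCX, hC⟩
    obtain ⟨c, hc⟩ := (hq.isEven_iff hE hH (hCX.trans hX)).1 hC
    exact ⟨c, hc ▸ hne, hc ▸ hCX⟩

end WhitneyDual

/-! ### Bicircular lift matroids -/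

section Lift

variable {V α : Type u} {G : Graph V α} {N : Matroid α} {X Y : Set α} {e f : α}

/- The symmetric difference of two cycles through `f` is a nonempty even set avoiding `f`. -/
lemma Graph.HasTwoCycles.exists_isCycle_subset (h : G.HasTwoCycles X) (f : α) :
    ∃ C, G.IsCycle C ∧ C ⊆ X \ {f} := by
  classical
  obtain ⟨C, D, hC, hD, hne, hCX, hDX⟩ := h
  by_cases hfC : f ∉ C
  · exact ⟨C, hC, subset_sdiff_singleton hCX hfC⟩
  by_cases hfD : f ∉ D
  · exact ⟨D, hD, subset_sdiff_singleton hDX hfD⟩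
  lift C to Finset α using hC.2.1
  lift D to Finset α using hD.2.1
  push Not at hfC hfD
  obtain ⟨B, hB, hBCD⟩ := (hC.isEven.symmDiff hD.isEven).exists_isCycle_subset
    (Finset.nonempty_iff_ne_empty.2 fun h0 => hne (by rw [symmDiff_eq_bot.1 h0]))
    (by
      rw [Finset.coe_symmDiff]
      exact symmDiff_subset_union.trans (union_subset hC.1 hD.1))
  refine ⟨B, hB, subset_sdiff_singleton ?_ ?_⟩
  · rw [Finset.coe_symmDiff] at hBCD
    exact hBCD.trans (symmDiff_subset_union.trans (union_subset hCX hDX))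
  · intro hfB
    have := hBCD hfB
    simp_all [Set.mem_symmDiff]

lemma IsLiftRep.dep_iff (h : IsLiftRep G N) (hX : X ⊆ N.E) : N.Dep X ↔ G.HasTwoCycles X := by
  rw [dep_iff_superset_isCircuit]
  constructor
  · rintro ⟨C, hCX, hC⟩
    obtain ⟨-, C₁, C₂, hC₁, hC₂, hne, h₁, h₂⟩ := ((h.2 C).1 hC).prop
    exact ⟨C₁, C₂, hC₁, hC₂, hne, h₁.trans hCX, h₂.trans hCX⟩
  · rintro ⟨C₁, C₂, hC₁, hC₂, hne, h₁, h₂⟩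
    have hfin : {Y | Y ⊆ C₁ ∪ C₂ ∧ G.HasTwoCycles Y}.Finite :=
      (hC₁.2.1.union hC₂.2.1).finite_subsets.subset fun Y hY => hY.1
    obtain ⟨C, hC, hmin⟩ := hfin.exists_le_minimal (a := C₁ ∪ C₂)
      ⟨subset_rfl, C₁, C₂, hC₁, hC₂, hne, subset_union_left, subset_union_right⟩
    have hCX : C ⊆ X := hC.trans (union_subset h₁ h₂)
    refine ⟨C, hCX, (h.2 C).2 ⟨⟨hCX.trans (h.1 ▸ hX), hmin.prop.2⟩, fun Y hY hYC => ?_⟩⟩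
    exact hmin.le_of_le ⟨hYC.trans hC, hY.2⟩ hYC

lemma IsLiftRep.exists_isCycle_subset_inter (h : IsLiftRep G N) (hX : N.Dep X) (hY : N.Dep Y)
    (hXY : N.Indep (X \ {e} ∪ Y \ {f})) : ∃ C, G.IsCycle C ∧ C ⊆ (X \ {e}) ∩ (Y \ {f}) := by
  obtain ⟨C, hC, hCX⟩ := ((h.dep_iff hX.subset_ground).1 hX).exists_isCycle_subset e
  obtain ⟨D, hD, hDY⟩ := ((h.dep_iff hY.subset_ground).1 hY).exists_isCycle_subset f
  have hCD : C = D := by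
    by_contra hne
    refine hXY.not_dep ((h.dep_iff hXY.subset_ground).2 ⟨C, D, hC, hD, hne, ?_, ?_⟩)
    · exact hCX.trans subset_union_left
    · exact hDY.trans subset_union_right
  exact ⟨C, hC, subset_inter hCX (hCD ▸ hDY)⟩

end Lift

/-! ### Counting edges by degrees -/

section Count

variable {V α : Type u} {G : Graph V α} {M : Matroid α}

namespace Graph

variable {C : Finset α} {e : α} {a b : V}

lemma IsEven.exists_ne_mem_inc (hC : G.IsEven C) (he : e ∈ C) (hinc : G.inc e = s(a, b))
    (hab : a ≠ b) : ∃ f ∈ C, f ≠ e ∧ a ∈ G.inc f := by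
  by_contra! h
  have hdeg : G.deg C a = 1 := by
    rw [deg_eq_sum, Finset.sum_eq_single_of_mem e he, hinc]
    · simp [hab]
    · intro f hf hfe
      exact Nat.eq_zero_of_not_pos (mt endSum_single_pos_iff.1 (h f hf hfe))
  exact Nat.not_even_one (hdeg ▸ hC a)

lemma IsEven.three_le_card (hC : G.IsEven C) (hne : C.Nonempty)
    (hloop : ∀ e ∈ C, ¬ (G.inc e).IsDiag) (hinj : InjOn G.inc C) : 3 ≤ C.card := by
  obtain ⟨e, he⟩ := hne
  rcases hinc : G.inc e with ⟨a, b⟩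
  have hab : a ≠ b := fun hab => hloop e he (by rw [hinc, hab]; rfl)
  obtain ⟨f, hf, hfe, haf⟩ := hC.exists_ne_mem_inc he hinc hab
  obtain ⟨g, hg, hge, hbg⟩ := hC.exists_ne_mem_inc he (hinc.trans Sym2.eq_swap) hab.symm
  refine Finset.two_lt_card.2 ⟨e, he, f, hf, g, hg, hfe.symm, hge.symm, ?_⟩
  rintro rfl
  exact hfe (hinj hf he (((Sym2.mem_and_mem_iff hab).1 ⟨haf, hbg⟩).trans hinc.symm))

lemma cut_single_subset (G : Graph V α) (v : V) :
    G.cut (Finsupp.single v 1) ⊆ {e ∈ G.E | v ∈ G.inc e} := by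
  classical
  rintro e ⟨he, hcut⟩
  refine ⟨he, by_contra fun hv => hcut ?_⟩
  cases hinc : G.inc e
  simp_all [Finsupp.single_apply]

lemma encard_cut_single_le_deg (hE : G.E.Finite) (v : V) :
    (G.cut (Finsupp.single v 1)).encard ≤ G.deg G.E v := by
  have hfin : {e ∈ G.E | v ∈ G.inc e}.Finite := hE.subset (sep_subset _ _)
  refine (encard_le_encard (G.cut_single_subset v)).trans ?_
  rw [← hfin.cast_ncard_eq, deg, Nat.cast_le]
  exact Nat.le_add_right _ _

lemma mem_cut_single (he : e ∈ G.E) (hloop : ¬ (G.inc e).IsDiag) (ha : a ∈ G.inc e) :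
    e ∈ G.cut (Finsupp.single a 1) := by
  refine ⟨he, ?_⟩
  obtain ⟨b, hinc⟩ := ha
  rw [hinc, Sym2.mk_isDiag_iff] at hloop
  simp [hinc, hloop]

lemma not_isDiag_of_boundary_ne_zero (hb : G.boundary e ≠ 0) : ¬ (G.inc e).IsDiag := by
  contrapose hb
  rcases hinc : G.inc e with ⟨a, b⟩
  rw [hinc, Sym2.mk_isDiag_iff] at hb
  simp [boundary, hinc, hb, ZModModule.add_self]

end Graph

/- The vertex stars are dual dependent, so every vertex of a nonempty forest has degree at least 3;
and a forest has fewer edges than vertices. -/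
lemma IsGraphicRep.three_mul_card_add_one_le (h : IsGraphicRep G M) (hE : M.E.Finite)
    (hdep : ∀ X, M✶.Dep X → 3 ≤ X.encard) {I : Finset α} (hI : M.Indep I) (hne : I.Nonempty) :
    3 * (I.card + 1) ≤ 2 * M.E.ncard := by
  classical
  obtain ⟨hEG, hM⟩ := isGraphicRep_iff_represents.1 h
  have hlin := (hM I hI.subset_ground).1 hI
  rw [hEG] at hE ⊢
  obtain ⟨E, hGE⟩ := hE.exists_finset_coe
  lift G.vertsOf I to Finset V using G.finite_vertsOf I with S hS
  lift G.vertsOf E to Finset V using G.finite_vertsOf E with T hT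
  have hST : S ⊆ T := by
    rw [← Finset.coe_subset, hS, hT]
    rintro v ⟨e, he, hv⟩
    exact ⟨e, hGE ▸ hEG ▸ hI.subset_ground he, hv⟩
  have hdeg : ∀ v ∈ S, 3 ≤ G.deg E v := by
    intro v hv
    obtain ⟨e, he, hve⟩ : v ∈ G.vertsOf I := hS ▸ hv
    have hcut := Graph.mem_cut_single (hEG ▸ hI.subset_ground he)
      (Graph.not_isDiag_of_boundary_ne_zero (hlin.ne_zero he)) hve
    have hstar : M✶.Dep (G.cut (Finsupp.single v 1)) :=
      h.dual_dep_iff.2 ⟨sep_subset _ _, _, ⟨e, hcut⟩, subset_rfl⟩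
    have := (hdep _ hstar).trans (G.encard_cut_single_le_deg hE v)
    rw [hGE]
    exact_mod_cast this
  have hIS : I.card < S.card := by
    refine Graph.card_lt_card_of_linearIndepOn_boundary ?_ hS.ge hlin
    obtain ⟨e, he⟩ := hne
    rw [← Finset.coe_nonempty, hS]
    exact ⟨_, e, he, Sym2.out_fst_mem _⟩
  calc 3 * (I.card + 1) ≤ S.card * 3 := by lia
    _ ≤ ∑ v ∈ S, G.deg E v := Finset.card_nsmul_le_sum S _ 3 hdeg
    _ ≤ ∑ v ∈ T, G.deg E v := Finset.sum_le_sum_of_subset hST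
    _ = 2 * G.E.ncard := by
      rw [G.sum_deg_eq_two_mul_card hT.ge, ← hGE, ncard_coe_finset]

end Count

/-! ### The complete graph on five vertices -/

namespace IsK5

variable {V α : Type u} {G : Graph V α} {M N : Matroid α} {e f : α} {a b x : V}

lemma not_isDiag (h : IsK5 G) (he : e ∈ G.E) : ¬ (G.inc e).IsDiag := by
  obtain ⟨v, hv, ed, -, hE, hinc⟩ := h
  obtain ⟨p, rfl⟩ := hE ▸ he
  rw [hinc, Sym2.isDiag_map hv]
  exact p.2

lemma injOn_inc (h : IsK5 G) : InjOn G.inc G.E := by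
  obtain ⟨v, hv, ed, -, hE, hinc⟩ := h
  rw [hE]
  rintro _ ⟨p, rfl⟩ _ ⟨q, rfl⟩ hpq
  rw [hinc, hinc] at hpq
  exact congrArg ed (Subtype.ext (Sym2.map.injective hv hpq))

lemma three_le_encard (h : IsK5 G) (hM : IsGraphicRep G M) {X : Set α} (hX : M.Dep X) :
    3 ≤ X.encard := by
  obtain ⟨hE, hrep⟩ := isGraphicRep_iff_represents.1 hM
  have hlin := (hrep.dep_iff hX.subset_ground).1 hX
  obtain ⟨C, hne, hCX, hC⟩ := Graph.not_linearIndepOn_boundary_iff.1 hlin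
  have hCE : ↑C ⊆ G.E := hE ▸ hCX.trans hX.subset_ground
  have hcard := hC.three_le_card hne (fun f hf => h.not_isDiag (hCE hf)) (h.injOn_inc.mono hCE)
  calc (3 : ℕ∞) ≤ C.card := by exact_mod_cast hcard
    _ = (C : Set α).encard := (encard_coe_eq_coe_finsetCard C).symm
    _ ≤ X.encard := encard_le_encard hCX

lemma exists_verts_eq_range (h : IsK5 G) :
    ∃ (v : Fin 5 ↪ V) (ed : {p : Sym2 (Fin 5) // ¬ p.IsDiag} ↪ α),
      G.verts = range v ∧ G.E = range ed ∧ ∀ p, G.inc (ed p) = p.1.map v := by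
  obtain ⟨v, hv, ed, hed, hE, hinc⟩ := h
  refine ⟨⟨v, hv⟩, ⟨ed, hed⟩, subset_antisymm ?_ ?_, hE, hinc⟩
  · rintro _ ⟨e, he, hx⟩
    obtain ⟨p, rfl⟩ := hE ▸ he
    obtain ⟨i, -, rfl⟩ := Sym2.mem_map.1 (hinc p ▸ hx)
    exact mem_range_self i
  · rintro _ ⟨i, rfl⟩
    have hi : ¬ s(i, i + 1).IsDiag := by simp
    refine ⟨ed ⟨_, hi⟩, hE ▸ mem_range_self _, ?_⟩
    rw [hinc]
    exact Sym2.mem_map.2 ⟨i, Sym2.mem_mk_left _ _, rfl⟩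

lemma ncard_verts (h : IsK5 G) : G.verts.ncard = 5 := by
  obtain ⟨v, -, hv, -⟩ := h.exists_verts_eq_range
  rw [hv, ncard_range_of_injective v.injective, Nat.card_eq_fintype_card, Fintype.card_fin]

lemma ncard_ground (h : IsK5 G) : G.E.ncard = 10 := by
  obtain ⟨-, ed, -, hE, -⟩ := h.exists_verts_eq_range
  rw [hE, ncard_range_of_injective ed.injective, Nat.card_eq_fintype_card]
  rfl

lemma ncard_avoiding (h : IsK5 G) (hx : x ∈ G.verts) : {f ∈ G.E | x ∉ G.inc f}.ncard = 6 := by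
  obtain ⟨v, ed, hv, hE, hinc⟩ := h.exists_verts_eq_range
  obtain ⟨i, rfl⟩ := hv ▸ hx
  have hpre : ed ⁻¹' {f | v i ∉ G.inc f} =
      (Finset.univ.filter fun p : {p : Sym2 (Fin 5) // ¬ p.IsDiag} => i ∉ p.1) := by
    ext p
    simp [hinc, Sym2.mem_map]
  have himage : {f ∈ G.E | v i ∉ G.inc f} = ed '' (ed ⁻¹' {f | v i ∉ G.inc f}) := by
    rw [image_preimage_eq_range_inter, hE]
    rfl
  rw [himage, hpre, ncard_image_of_injective _ ed.injective, ncard_coe_finset]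
  clear hpre himage hx
  revert i
  decide

lemma exists_inc_eq (h : IsK5 G) (ha : a ∈ G.verts) (hb : b ∈ G.verts) (hab : a ≠ b) :
    ∃ e ∈ G.E, G.inc e = s(a, b) := by
  obtain ⟨v, ed, hv, hE, hinc⟩ := h.exists_verts_eq_range
  obtain ⟨⟨i, rfl⟩, j, rfl⟩ := And.intro (hv ▸ ha) (hv ▸ hb)
  exact ⟨ed ⟨s(i, j), ne_of_apply_ne v hab⟩, hE ▸ mem_range_self _, hinc _⟩

lemma dep_star (h : IsK5 G) (hN : IsGraphicRep G N✶) (ha : a ∈ G.verts) :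
    N.Dep {f ∈ G.E | a ∈ G.inc f} := by
  obtain ⟨e, he, hae⟩ := ha
  rw [← dual_dual N, hN.dual_dep_iff]
  exact ⟨sep_subset _ _, _, ⟨e, Graph.mem_cut_single he (h.not_isDiag he) hae⟩,
    G.cut_single_subset a⟩

lemma indep_avoiding (h : IsK5 G) (hN : IsGraphicRep G N✶) (hx : x ∈ G.verts) :
    N.Indep {f ∈ G.E | x ∉ G.inc f} := by
  have hE : {f ∈ G.E | x ∉ G.inc f} ⊆ N.E := (sep_subset _ _).trans_eq hN.1.symm
  rw [← not_dep_iff, ← dual_dual N, hN.dual_dep_iff]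
  rintro ⟨-, c, ⟨e, he, hce⟩, hc⟩
  have hconst : ∀ a ∈ G.verts, c a = c x := by
    intro a ha
    by_contra hne
    obtain ⟨f, hf, hinc⟩ := h.exists_inc_eq ha hx (ne_of_apply_ne c hne)
    refine (hc ⟨hf, ?_⟩).2 (hinc ▸ Sym2.mem_mk_right a x)
    rwa [hinc, endSum_mk, Ne, CharTwo.add_eq_zero]
  rcases hinc : G.inc e with ⟨a, b⟩
  refine hce ?_
  rw [hinc, endSum_mk, hconst a ⟨e, he, hinc ▸ Sym2.mem_mk_left a b⟩,
    hconst b ⟨e, he, hinc ▸ Sym2.mem_mk_right a b⟩, CharTwo.add_self_eq_zero]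

/- Two vertex stars meet in an edge `e` joining their centres, and both become independent
together once their edges to a third vertex are removed. -/
lemma isCycle_singleton (h : IsK5 G) (hN : IsGraphicRep G N✶) {W : Type u} {H : Graph W α}
    (hH : IsLiftRep H N) (he : e ∈ G.E) : H.IsCycle {e} := by
  rcases hinc : G.inc e with ⟨a, b⟩
  have hab : a ≠ b := by
    have := h.not_isDiag he
    rwa [hinc, Sym2.mk_isDiag_iff] at this
  have ha : a ∈ G.verts := ⟨e, he, hinc ▸ Sym2.mem_mk_left a b⟩
  have hb : b ∈ G.verts := ⟨e, he, hinc ▸ Sym2.mem_mk_right a b⟩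
  obtain ⟨x, hx, hxab⟩ : ∃ x ∈ G.verts, x ∉ ({a, b} : Set V) := by
    refine exists_mem_notMem_of_ncard_lt_ncard ?_
    rw [h.ncard_verts, ncard_pair hab]
    norm_num
  obtain ⟨hxa, hxb⟩ : x ≠ a ∧ x ≠ b := by simpa using hxab
  have huniq {a b : V} {e f : α} (hab : a ≠ b) (he : e ∈ G.E) (hinc : G.inc e = s(a, b))
      (hf : f ∈ G.E) (haf : a ∈ G.inc f) (hbf : b ∈ G.inc f) : f = e :=
    h.injOn_inc hf he (((Sym2.mem_and_mem_iff hab).1 ⟨haf, hbf⟩).trans hinc.symm)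
  obtain ⟨f, hf, hfinc⟩ := h.exists_inc_eq hx ha hxa
  obtain ⟨g, hg, hginc⟩ := h.exists_inc_eq hx hb hxb
  have hind := (h.indep_avoiding hN hx).subset (I := {k ∈ G.E | a ∈ G.inc k} \ {f} ∪
      {k ∈ G.E | b ∈ G.inc k} \ {g}) <| union_subset
    (fun k hk => ⟨hk.1.1, fun hxk => hk.2 (huniq hxa hf hfinc hk.1.1 hxk hk.1.2)⟩)
    (fun k hk => ⟨hk.1.1, fun hxk => hk.2 (huniq hxb hg hginc hk.1.1 hxk hk.1.2)⟩)
  obtain ⟨C, hC, hCsub⟩ :=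
    hH.exists_isCycle_subset_inter (h.dep_star hN ha) (h.dep_star hN hb) hind
  have hCe : C ⊆ {e} := fun k hk =>
    huniq hab he hinc (hCsub hk).1.1.1 (hCsub hk).1.1.2 (hCsub hk).2.1.2
  rwa [← hC.2.2.1.subset_singleton_iff.1 hCe]

lemma not_isBicircularLift (h : IsK5 G) (hN : IsGraphicRep G N✶) : ¬ IsBicircularLift N := by
  rintro ⟨W, H, hH⟩
  obtain ⟨x, hx⟩ : G.verts.Nonempty := nonempty_of_ncard_ne_zero (by simp [h.ncard_verts])
  obtain ⟨e, he, f, hf, hne⟩ := (one_lt_ncard_iff_nontrivial_and_finite.1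
    (h.ncard_avoiding hx ▸ by norm_num : 1 < {f ∈ G.E | x ∉ G.inc f}.ncard)).1
  have hind := h.indep_avoiding hN hx
  refine hind.not_dep ((hH.dep_iff hind.subset_ground).2 ⟨{e}, {f}, ?_, ?_, ?_, ?_, ?_⟩)
  · exact h.isCycle_singleton hN hH he.1
  · exact h.isCycle_singleton hN hH hf.1
  · simpa using hne
  · simpa using he
  · simpa using hf

lemma not_isGraphic (h : IsK5 G) (hN : IsGraphicRep G N✶) : ¬ IsGraphic N := by
  rintro ⟨W, H, hH⟩
  obtain ⟨x, hx⟩ : G.verts.Nonempty := nonempty_of_ncard_ne_zero (by simp [h.ncard_verts])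
  have hind := h.indep_avoiding hN hx
  have hE : N.E = G.E := hN.1
  have hEfin : N.E.Finite := hE ▸ finite_of_ncard_ne_zero (by simp [h.ncard_ground])
  lift {f ∈ G.E | x ∉ G.inc f} to Finset α using hEfin.subset hind.subset_ground with I hI
  have hIcard : I.card = 6 := by rw [← ncard_coe_finset, hI, h.ncard_avoiding hx]
  have hIne : I.Nonempty := Finset.card_pos.1 (by lia)
  have hcount :=
    hH.three_mul_card_add_one_le hEfin (fun X => h.three_le_encard hN) hind (by exact_mod_cast hIne)
  rw [hIcard, hE, h.ncard_ground] at hcount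
  norm_num at hcount

end IsK5

/-! ### Proper minors -/

/-- The ends of the edges of the bipyramid `K₅ - e`: the spoke `inl (j, i)` joins the pole `inl j`
to the rim vertex `inr i`, and the rim edge `inr i` is opposite to the rim vertex `inr i`. -/
def bipyramidEnds : (Fin 2 × Fin 3) ⊕ Fin 3 → Sym2 (Fin 2 ⊕ Fin 3) :=
  Sum.elim (fun i => s(.inl i.1, .inr i.2)) fun i => s(.inr (i + 1), .inr (i + 2))

/-- A labelling of the graph `G` as the complete graph `K₅` in which `e` is the edge joining the
two poles of the bipyramid formed by the other edges. -/
structure K5Labelling {V α : Type u} (G : Graph V α) (e : α) where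
  vertex : Fin 2 ⊕ Fin 3 ↪ V
  edge : (Fin 2 × Fin 3) ⊕ Fin 3 ↪ α
  ground_eq : G.E = insert e (range edge)
  notMem_range : e ∉ range edge
  inc_axis : G.inc e = s(vertex (.inl 0), vertex (.inl 1))
  inc_edge (i) : G.inc (edge i) = (bipyramidEnds i).map vertex

lemma bipyramidEnds_injective : Function.Injective bipyramidEnds := by decide

lemma mem_range_bipyramidEnds_iff {p : Sym2 (Fin 2 ⊕ Fin 3)} :
    p ∈ range bipyramidEnds ↔ ¬ p.IsDiag ∧ p ≠ s(.inl 0, .inl 1) := by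
  revert p
  simp only [mem_range]
  decide

lemma exists_equiv_apply_eq {a b : Fin 5} (hab : a ≠ b) :
    ∃ τ : Fin 2 ⊕ Fin 3 ≃ Fin 5, τ (.inl 0) = a ∧ τ (.inl 1) = b := by
  have htwo := Equiv.Perm.isMultiplyPretransitive (Fin 5) 2
  obtain ⟨σ, h0, h1⟩ := MulAction.is_two_pretransitive_iff.1 htwo (zero_ne_one' (Fin 5)) hab
  exact ⟨finSumFinEquiv.trans σ, h0, h1⟩

section K5Labelling

variable {V α : Type u} {G : Graph V α} {e : α}

lemma IsK5.nonempty_labelling (h : IsK5 G) (he : e ∈ G.E) : Nonempty (K5Labelling G e) := by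
  obtain ⟨v, hv, ed, hed, hE, hinc⟩ := h
  obtain ⟨⟨p, hp⟩, rfl⟩ := hE ▸ he
  cases p with | h a b => ?_
  obtain ⟨τ, rfl, rfl⟩ := exists_equiv_apply_eq (a := a) (b := b) hp
  have hτ : Function.Injective (Sym2.map τ) := Sym2.map.injective τ.injective
  have hdiag (i) : ¬ ((bipyramidEnds i).map τ).IsDiag := by
    rw [Sym2.isDiag_map τ.injective]
    exact (mem_range_bipyramidEnds_iff.1 (mem_range_self i)).1
  let edge (i) : α := ed ⟨(bipyramidEnds i).map τ, hdiag i⟩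
  refine ⟨⟨⟨v ∘ τ, hv.comp τ.injective⟩, ⟨edge, fun i j hij => ?_⟩, ?_, ?_, hinc _, fun i => ?_⟩⟩
  · exact bipyramidEnds_injective (hτ (congrArg Subtype.val (hed hij)))
  · rw [hE]
    refine subset_antisymm ?_ (insert_subset ⟨_, rfl⟩ (range_subset_iff.2 fun i => ⟨_, rfl⟩))
    rintro _ ⟨⟨p, hp'⟩, rfl⟩
    obtain ⟨p, rfl⟩ : ∃ q, q.map τ = p := ⟨p.map τ.symm, by simp [Sym2.map_map]⟩
    by_cases hpa : p = s(.inl 0, .inl 1)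
    · exact .inl (congrArg ed (Subtype.ext (by simp [hpa])))
    · rw [Sym2.isDiag_map τ.injective] at hp'
      obtain ⟨i, rfl⟩ := mem_range_bipyramidEnds_iff.2 ⟨hp', hpa⟩
      exact .inr ⟨i, rfl⟩
  · rintro ⟨i, hi⟩
    refine (mem_range_bipyramidEnds_iff.1 (mem_range_self i)).2 (hτ ?_)
    exact (congrArg Subtype.val (hed hi)).trans (by simp)
  · exact (hinc _).trans (Sym2.map_map ..)

end K5Labelling

/-- The ends of the edges of the triangular prism, the planar dual of the bipyramid. -/
def prismEnds : (Fin 2 × Fin 3) ⊕ Fin 3 → Sym2 (Fin 2 × Fin 3) :=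
  Sum.elim (fun i => s((i.1, i.2 + 1), (i.1, i.2 + 2))) fun i => s((0, i), (1, i))

lemma sum_mul_endSum_single {ι W : Type*} [Fintype ι] [DecidableEq ι] [DecidableEq W]
    {q : ι → Sym2 W} {w : W} {S : Finset ι}
    (hS : ∀ i, endSum (Pi.single w 1 : W → ZMod 2) (q i) = if i ∈ S then 1 else 0)
    (z : ι → ZMod 2) : ∑ i, z i * endSum (Finsupp.single w 1) (q i) = ∑ i ∈ S, z i := by
  simp [Finsupp.single_eq_pi_single, hS]

lemma isWhitneyDual_bipyramidEnds : IsWhitneyDual bipyramidEnds prismEnds := by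
  intro z
  constructor
  · rintro ⟨c, hc⟩
    obtain rfl : z = fun i => endSum c (bipyramidEnds i) := funext hc
    clear hc
    simp only [Finsupp.single_eq_pi_single]
    revert c
    decide
  · intro h
    have hstar (j : Fin 2) (i : Fin 3) :
        z (.inl (j, i + 1)) + (z (.inl (j, i + 2)) + z (.inr i)) = 0 := by
      have hi : ∑ k ∈ {.inl (j, i + 1), .inl (j, i + 2), .inr i}, z k = 0 :=
        (sum_mul_endSum_single (by revert i j; decide) z).symm.trans (h (j, i))
      simpa using hi
    have hpoles (i : Fin 3) :
        z (.inl (0, i)) + z (.inl (1, i)) = z (.inl (0, 0)) + z (.inl (1, 0)) := by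
      have h₁ (j : Fin 2) : z (.inl (j, 2)) + (z (.inl (j, 0)) + z (.inr 1)) = 0 := hstar j 1
      have h₂ (j : Fin 2) : z (.inl (j, 0)) + (z (.inl (j, 1)) + z (.inr 2)) = 0 := hstar j 2
      have h₁₀ := h₁ 0
      have h₁₁ := h₁ 1
      have h₂₀ := h₂ 0
      have h₂₁ := h₂ 1
      fin_cases i <;> simp only [Fin.reduceFinMk, Fin.zero_eta, Fin.mk_one, Fin.isValue] <;> grind
    refine ⟨Sum.elim ![0, z (.inl (0, 0)) + z (.inl (1, 0))] fun i => z (.inl (0, i)), ?_⟩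
    rintro (⟨j, i⟩ | i)
    · fin_cases j
      · simp [bipyramidEnds]
      · change z (.inl (1, i)) = z (.inl (0, 0)) + z (.inl (1, 0)) + z (.inl (0, i))
        grind
    · change z (.inr i) = z (.inl (0, i + 1)) + z (.inl (0, i + 2))
      grind

/-- The map contracting the axis of the bipyramid: the two poles become the vertex `none`. -/
def mergePoles : Fin 2 ⊕ Fin 3 → Option (Fin 3) :=
  Sum.elim (fun _ => none) some

/-- The ends of the edges of the planar dual of the contracted bipyramid: `inl i` is the digon at
the rim vertex `i`, `inr (some i)` is the triangle at the rim edge `i`, and `inr none` is the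
outer face. -/
def wheelDualEnds : (Fin 2 × Fin 3) ⊕ Fin 3 → Sym2 (Fin 3 ⊕ Option (Fin 3)) :=
  Sum.elim (fun i => s(.inl i.2, .inr (some (![i.2 + 1, i.2 + 2] i.1))))
    fun i => s(.inr (some i), .inr none)

lemma isWhitneyDual_map_mergePoles :
    IsWhitneyDual (fun i => (bipyramidEnds i).map mergePoles) wheelDualEnds := by
  intro z
  constructor
  · rintro ⟨c, hc⟩
    obtain rfl : z = fun i => endSum c ((bipyramidEnds i).map mergePoles) := funext hc
    clear hc
    simp only [Finsupp.single_eq_pi_single]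
    revert c
    decide
  · intro h
    have hdigon (i : Fin 3) : z (.inl (0, i)) + z (.inl (1, i)) = 0 := by
      have hi : ∑ k ∈ {.inl (0, i), .inl (1, i)}, z k = 0 :=
        (sum_mul_endSum_single (by revert i; decide) z).symm.trans (h (.inl i))
      simpa using hi
    have htriangle (i : Fin 3) :
        z (.inl (0, i + 2)) + (z (.inl (1, i + 1)) + z (.inr i)) = 0 := by
      have hi : ∑ k ∈ {.inl (0, i + 2), .inl (1, i + 1), .inr i}, z k = 0 :=
        (sum_mul_endSum_single (by revert i; decide) z).symm.trans (h (.inr (some i)))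
      simpa using hi
    refine ⟨fun v => v.elim 0 fun i => z (.inl (0, i)), ?_⟩
    rintro (⟨j, i⟩ | i)
    · change z (.inl (j, i)) = 0 + z (.inl (0, i))
      fin_cases j <;> grind
    · change z (.inr i) = z (.inl (0, i + 1)) + z (.inl (0, i + 2))
      grind

section Minors

variable {V α : Type u} {G : Graph V α} {N : Matroid α} {e : α}

lemma K5Labelling.exists_contract_map (L : K5Labelling G e) :
    ∃ ρ : Option (Fin 3) → Quot (G.AdjOn {e}), Function.Injective ρ ∧
      ∀ x, ρ (mergePoles x) = Quot.mk _ (L.vertex x) := by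
  have hret (u v : V) (huv : G.AdjOn {e} u v) : mergePoles (Function.invFun L.vertex u) =
      mergePoles (Function.invFun L.vertex v) := by
    obtain ⟨_, rfl, hinc⟩ := huv
    rw [L.inc_axis] at hinc
    obtain ⟨rfl, rfl⟩ | ⟨rfl, rfl⟩ := Sym2.eq_iff.1 hinc <;>
      simp only [Function.leftInverse_invFun L.vertex.injective _, mergePoles, Sum.elim_inl]
  refine ⟨fun x => Quot.mk _ (L.vertex (x.elim (.inl 0) .inr)),
    Function.LeftInverse.injective (g := Quot.lift _ hret) ?_, ?_⟩
  · rintro (_ | i) <;>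
      simp [Function.leftInverse_invFun L.vertex.injective _, mergePoles]
  · rintro (j | i)
    · fin_cases j
      · rfl
      · exact Quot.sound ⟨e, rfl, L.inc_axis⟩
    · rfl

lemma K5Labelling.ground_sdiff (L : K5Labelling G e) : G.E \ {e} = range L.edge := by
  rw [L.ground_eq, insert_sdiff_self_of_notMem L.notMem_range]

lemma K5Labelling.isGraphic_contract (L : K5Labelling G e) (hN : IsGraphicRep G N✶) :
    IsGraphic (N ／ {e}) := by
  have hq : IsWhitneyDual (fun i => (G.delete {e}).inc (L.edge i)) prismEnds := by
    simpa only [Graph.delete, L.inc_edge] using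
      isWhitneyDual_bipyramidEnds.map_left L.vertex.injective
  simpa using (hN.delete {e}).isGraphic_dual L.ground_sdiff hq

lemma K5Labelling.isGraphic_delete (L : K5Labelling G e) (hN : IsGraphicRep G N✶) :
    IsGraphic (N ＼ {e}) := by
  have he : {e} ⊆ N✶.E := by
    rw [hN.1, L.ground_eq, singleton_subset_iff]
    exact mem_insert e _
  obtain ⟨ρ, hρ, hρL⟩ := L.exists_contract_map
  have hq : IsWhitneyDual (fun i => (G.contract {e}).inc (L.edge i)) wheelDualEnds := by
    have hinc (i) : (G.contract {e}).inc (L.edge i) =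
        ((bipyramidEnds i).map mergePoles).map ρ := by
      simp only [Graph.contract, L.inc_edge, Sym2.map_map]
      exact congrArg (Sym2.map · _) (funext fun x => (hρL x).symm)
    simpa only [hinc] using isWhitneyDual_map_mergePoles.map_left hρ
  simpa using (hN.contract he).isGraphic_dual L.ground_sdiff hq

lemma IsK5.isGraphic_of_isStrictMinor {N' : Matroid α} (h : IsK5 G) (hN : IsGraphicRep G N✶)
    (hN' : IsStrictMinor N' N) : IsGraphic N' := by
  obtain ⟨⟨C, D, rfl⟩, hne⟩ := hN'
  change (N ／ C) ＼ D ≠ N at hne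
  change IsGraphic ((N ／ C) ＼ D)
  have hE : N.E = G.E := hN.1
  by_cases hC : Disjoint C N.E
  · rw [contract_eq_self_iff.2 hC] at hne ⊢
    obtain ⟨e, heD, heN⟩ := not_disjoint_iff.1 (mt delete_eq_self_iff.2 hne)
    obtain ⟨L⟩ := h.nonempty_labelling (hE ▸ heN)
    rw [← insert_eq_of_mem heD, ← singleton_union, ← delete_delete]
    exact (L.isGraphic_delete hN).delete D
  · obtain ⟨e, heC, heN⟩ := not_disjoint_iff.1 hC
    obtain ⟨L⟩ := h.nonempty_labelling (hE ▸ heN)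
    rw [← insert_eq_of_mem heC, ← singleton_union, ← contract_contract]
    exact ((L.isGraphic_contract hN).contract C).delete D

end Minors

theorem statement_2 {α : Type u} (N : Matroid α)
    (h : ∃ (V : Type u) (G : Graph V α), IsK5 G ∧ IsGraphicRep G N✶) :
    ExcludedMinorBL N ∧ ¬ IsBicircularLift N := by
  obtain ⟨V, G, hK, hG⟩ := h
  have hlift : ¬ IsBicircularLift N := hK.not_isBicircularLift hG
  have hminors : ∀ N', IsStrictMinor N' N → InBL N' := fun N' hN' =>
    .inl (hK.isGraphic_of_isStrictMinor hG hN')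
  exact ⟨⟨not_or_intro (hK.not_isGraphic hG) hlift, hminors⟩, hlift⟩

end BLFormal
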